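/- arXiv:cs/0102025 — 8 statements merged into one kernel-verified Lean document; each statement's English description precedes it below -/
import Mathlib

section
/- For every LO program P and contexts Δ, Δ' with Δ ≼ Δ' (multiset inclusion), if the sequent P ⇒ Δ is provable in LO then the sequent P ⇒ Δ' is provable in LO (admissibility of weakening in LO). -/
/-- LO goals over a signature `σ`: atoms, ⊤, ⅋ (par) and & (with). -/
inductive Goal (σ : Type) : Type
  | atom : σ → Goal σ
  | top : Goal σ
  | par : Goal σ → Goal σ → Goal σ
  | wth : Goal σ → Goal σ → Goal σ
  deriving DecidableEq

variable {σ : Type} [DecidableEq σ] [Fintype σ]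

/-- A fact: a finite multiset over the signature. -/
abbrev LOFact (σ : Type) := Multiset σ

/-- A context: a finite multiset of goals. -/
abbrev Ctx (σ : Type) := Multiset (Goal σ)

/-- An LO program: a finite set of clauses `H ⊸ G`, a clause being represented by
the multiset ⟨H⟩ of atoms of its head together with its body goal. -/
abbrev LOProgram (σ : Type) := Finset (Multiset σ × Goal σ)

/-- LO provability `P ⇒ Δ`. -/
inductive LOProv (P : LOProgram σ) : Ctx σ → Prop
  | topR (Δ : Ctx σ) : LOProv P (Goal.top ::ₘ Δ)
  | parR (G₁ G₂ : Goal σ) (Δ : Ctx σ) :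
      LOProv P (G₁ ::ₘ G₂ ::ₘ Δ) → LOProv P (Goal.par G₁ G₂ ::ₘ Δ)
  | wthR (G₁ G₂ : Goal σ) (Δ : Ctx σ) :
      LOProv P (G₁ ::ₘ Δ) → LOProv P (G₂ ::ₘ Δ) → LOProv P (Goal.wth G₁ G₂ ::ₘ Δ)
  | bc (H : Multiset σ) (G : Goal σ) (A : LOFact σ) :
      (H, G) ∈ P → LOProv P (G ::ₘ A.map Goal.atom) →
      LOProv P (H.map Goal.atom + A.map Goal.atom)

/-!
The backchaining rule is the only one that restricts its side context, which must be a fact; a fact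
extended by an atom is again a fact, so an extra atom can be carried through a whole derivation.
An arbitrary extra goal is decomposed by `⅋` and `&` until only atoms and `⊤` remain: `⊤` closes
its branch, and atoms are added by the previous case. This recursion is on the goal only, so it
never has to push a compound goal through a backchaining step.
-/

namespace LOProv

variable {τ : Type} {P : LOProgram τ} {Δ : Ctx τ}

theorem cons_atom (h : LOProv P Δ) (a : τ) : LOProv P (Goal.atom a ::ₘ Δ) := by
  induction h with
  | topR Δ =>
    rw [Multiset.cons_swap]
    exact topR _
  | parR G₁ G₂ Δ _ ih =>
    rw [Multiset.cons_swap _ G₁, Multiset.cons_swap _ G₂] at ih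
    rw [Multiset.cons_swap]
    exact parR G₁ G₂ _ ih
  | wthR G₁ G₂ Δ _ _ ih₁ ih₂ =>
    rw [Multiset.cons_swap] at ih₁ ih₂ ⊢
    exact wthR G₁ G₂ _ ih₁ ih₂
  | bc H G A hHG _ ih =>
    rw [Multiset.cons_swap, ← Multiset.map_cons] at ih
    rw [← Multiset.add_cons, ← Multiset.map_cons]
    exact bc H G (a ::ₘ A) hHG ih

theorem cons (h : LOProv P Δ) (G : Goal τ) : LOProv P (G ::ₘ Δ) := by
  induction G generalizing Δ with
  | atom a => exact h.cons_atom a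
  | top => exact topR Δ
  | par G₁ G₂ ih₁ ih₂ => exact parR G₁ G₂ Δ (ih₁ (ih₂ h))
  | wth G₁ G₂ ih₁ ih₂ => exact wthR G₁ G₂ Δ (ih₁ h) (ih₂ h)

theorem add_left (h : LOProv P Δ) (Γ : Ctx τ) : LOProv P (Γ + Δ) := by
  induction Γ using Multiset.induction_on with
  | empty => rwa [zero_add]
  | cons G Γ ih =>
    rw [Multiset.cons_add]
    exact ih.cons G

end LOProv

theorem lo_weakening_general {τ : Type} {P : LOProgram τ} {Δ Δ' : Ctx τ}
    (hsub : Δ ≤ Δ') (hprov : LOProv P Δ) : LOProv P Δ' := by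
  obtain ⟨Γ, rfl⟩ := exists_add_of_le hsub
  rw [add_comm]
  exact hprov.add_left Γ

/-- Admissibility of weakening in LO: provability is preserved under
multiset inclusion of contexts. -/
theorem lo_weakening (P : LOProgram σ) (Δ Δ' : Ctx σ)
    (hsub : Δ ≤ Δ') (hprov : LOProv P Δ) : LOProv P Δ' :=
  lo_weakening_general hsub hprov
end

section
/- Soundness and completeness of the fixpoint semantics of LO: for every LO program P, F(P) = O(P), i.e., the least fixpoint of T_P equals the set of facts A such that the sequent P ⇒ A is provable in LO. -/
variable {σ : Type} [DecidableEq σ] [Fintype σ]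

/-- The satisfiability judgment `I ⊨ Δ[A]`. -/
inductive Sat (I : Set (LOFact σ)) : Ctx σ → LOFact σ → Prop
  | top (Δ : Ctx σ) (A : LOFact σ) : Sat I (Goal.top ::ₘ Δ) A
  | fact (A A' : LOFact σ) : A + A' ∈ I → Sat I (A.map Goal.atom) A'
  | par (G₁ G₂ : Goal σ) (Δ : Ctx σ) (A : LOFact σ) :
      Sat I (G₁ ::ₘ G₂ ::ₘ Δ) A → Sat I (Goal.par G₁ G₂ ::ₘ Δ) A
  | wth (G₁ G₂ : Goal σ) (Δ : Ctx σ) (A : LOFact σ) :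
      Sat I (G₁ ::ₘ Δ) A → Sat I (G₂ ::ₘ Δ) A → Sat I (Goal.wth G₁ G₂ ::ₘ Δ) A

/-- The immediate-consequence operator `T_P`. -/
def TP (P : LOProgram σ) (I : Set (LOFact σ)) : Set (LOFact σ) :=
  { M | ∃ H G A, (H, G) ∈ P ∧ Sat I ({G} : Ctx σ) A ∧ M = H + A }

/-- The operational semantics `O(P)`: the set of provable facts. -/
def OP (P : LOProgram σ) : Set (LOFact σ) := { A : LOFact σ | LOProv P (A.map Goal.atom) }

/-!
Atoms may be moved from the context `Δ` of `I ⊨ Δ[A]` into the fact `A`. Hence, when `I` is closed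
under `T_P`, satisfiability with the empty fact is closed under every rule of LO, backchaining
included, so every provable fact belongs to `I`. Conversely, reading `I ⊨ Δ[A]` with `I = O(P)` as
`P ⇒ Δ + A` turns every satisfiability rule into a rule of LO, so `O(P)` is itself closed under
`T_P`. Thus `O(P)` is the least set closed under `T_P`, which is the least fixpoint by
Knaster–Tarski.
-/

section Semantics

variable {α : Type} {P : LOProgram α} {I J : Set (LOFact α)} {Δ : Ctx α} {A : LOFact α}

namespace Sat

theorem mono (h : I ⊆ J) (hs : Sat I Δ A) : Sat J Δ A := by
  induction hs with
  | top Δ A => exact .top Δ A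
  | fact A A' hA => exact .fact A A' (h hA)
  | par G₁ G₂ Δ A _ ih => exact .par G₁ G₂ Δ A ih
  | wth G₁ G₂ Δ A _ _ ih₁ ih₂ => exact .wth G₁ G₂ Δ A ih₁ ih₂

theorem mem_of_zero (hs : Sat I 0 A) : A ∈ I := by
  generalize hΔ : (0 : Ctx α) = Δ at hs
  cases hs with
  | fact B A hA =>
    obtain rfl : B = 0 := Multiset.map_eq_zero.1 hΔ.symm
    rwa [zero_add] at hA
  | _ => exact absurd hΔ Multiset.zero_ne_cons

theorem of_cons_atom {a : α} (hs : Sat I (Goal.atom a ::ₘ Δ) A) : Sat I Δ (a ::ₘ A) := by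
  classical
  generalize hΓ : Goal.atom a ::ₘ Δ = Γ at hs
  induction hs generalizing Δ with
  | top Γ A =>
    obtain ⟨⟨⟩, -⟩ | ⟨-, Δ', rfl, -⟩ := Multiset.cons_eq_cons.1 hΓ
    exact .top Δ' (a ::ₘ A)
  | fact B A hBA =>
    obtain ⟨b, hb, hba, rfl⟩ := (Multiset.map_eq_cons _ _ _ _).2 hΓ.symm
    obtain rfl := Goal.atom.inj hba
    refine .fact (B.erase b) (b ::ₘ A) ?_
    rwa [Multiset.add_cons, ← Multiset.cons_add, Multiset.cons_erase hb]
  | par G₁ G₂ Γ A _ ih =>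
    obtain ⟨⟨⟩, -⟩ | ⟨-, Δ', rfl, rfl⟩ := Multiset.cons_eq_cons.1 hΓ
    exact .par G₁ G₂ Δ' _ (ih (by rw [Multiset.cons_swap, Multiset.cons_swap (Goal.atom a)]))
  | wth G₁ G₂ Γ A _ _ ih₁ ih₂ =>
    obtain ⟨⟨⟩, -⟩ | ⟨-, Δ', rfl, rfl⟩ := Multiset.cons_eq_cons.1 hΓ
    exact .wth G₁ G₂ Δ' _ (ih₁ (Multiset.cons_swap _ _ _)) (ih₂ (Multiset.cons_swap _ _ _))

theorem of_add_map_atom {B : LOFact α} (hs : Sat I (Δ + A.map Goal.atom) B) :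
    Sat I Δ (A + B) := by
  induction A using Multiset.induction_on generalizing B with
  | empty => simpa only [Multiset.map_zero, add_zero, zero_add] using hs
  | cons a A ih =>
    rw [Multiset.map_cons, Multiset.add_cons] at hs
    rw [Multiset.cons_add, ← Multiset.add_cons]
    exact ih hs.of_cons_atom

theorem loProv_add_map_atom (hs : Sat (OP P) Δ A) : LOProv P (Δ + A.map Goal.atom) := by
  induction hs with
  | top Δ A =>
    rw [Multiset.cons_add]
    exact .topR _
  | fact A A' hA => rwa [← Multiset.map_add]
  | par G₁ G₂ Δ A _ ih =>
    simp only [Multiset.cons_add] at ih ⊢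
    exact .parR G₁ G₂ _ ih
  | wth G₁ G₂ Δ A _ _ ih₁ ih₂ =>
    simp only [Multiset.cons_add] at ih₁ ih₂ ⊢
    exact .wthR G₁ G₂ _ ih₁ ih₂

end Sat

theorem LOProv.sat_zero (hI : TP P I ⊆ I) (hp : LOProv P Δ) : Sat I Δ 0 := by
  induction hp with
  | topR Δ => exact .top Δ 0
  | parR G₁ G₂ Δ _ ih => exact .par G₁ G₂ Δ 0 ih
  | wthR G₁ G₂ Δ _ _ ih₁ ih₂ => exact .wth G₁ G₂ Δ 0 ih₁ ih₂
  | bc H G A hHG _ ih =>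
    rw [← Multiset.singleton_add] at ih
    have hG : Sat I {G} A := add_zero A ▸ ih.of_add_map_atom
    have hHA : H + A ∈ I := hI ⟨H, G, A, hHG, hG, rfl⟩
    rw [← Multiset.map_add]
    exact .fact (H + A) 0 (by rwa [add_zero])

theorem OP_subset_of_TP_subset (hI : TP P I ⊆ I) : OP P ⊆ I := by
  intro A hA
  have hctx : Sat I (0 + A.map Goal.atom) 0 := (zero_add (A.map Goal.atom)).symm ▸ hA.sat_zero hI
  have hfact : Sat I 0 A := add_zero A ▸ hctx.of_add_map_atom
  exact hfact.mem_of_zero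

theorem TP_OP_subset_OP (P : LOProgram α) : TP P (OP P) ⊆ OP P := by
  rintro _ ⟨H, G, A, hHG, hG, rfl⟩
  have hbody : LOProv P (G ::ₘ A.map Goal.atom) :=
    Multiset.singleton_add G _ ▸ hG.loProv_add_map_atom
  have hfact : LOProv P (H.map Goal.atom + A.map Goal.atom) := .bc H G A hHG hbody
  rwa [← Multiset.map_add] at hfact

theorem TP_monotone (P : LOProgram α) : Monotone (TP P) := by
  rintro I J hIJ _ ⟨H, G, A, hHG, hG, rfl⟩
  exact ⟨H, G, A, hHG, hG.mono hIJ, rfl⟩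

/-- The operator `T_P` bundled with its monotonicity, so that `(TPHom P).lfp` is `F(P)`. -/
def TPHom (P : LOProgram α) : Set (LOFact α) →o Set (LOFact α) := ⟨TP P, TP_monotone P⟩

theorem lfp_TPHom_eq_OP (P : LOProgram α) : (TPHom P).lfp = OP P :=
  le_antisymm ((TPHom P).lfp_le (TP_OP_subset_OP P))
    ((TPHom P).le_lfp fun _ => OP_subset_of_TP_subset)

theorem fixpoint_eq_operational_general (P : LOProgram α) :
    IsLeast { I : Set (LOFact α) | TP P I = I } (OP P) :=
  lfp_TPHom_eq_OP P ▸ (TPHom P).isLeast_lfp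

end Semantics

/-- Soundness and completeness of the fixpoint semantics:
`O(P)` is the least fixpoint of `T_P`, i.e. `F(P) = O(P)`. -/
theorem fixpoint_eq_operational (P : LOProgram σ) :
    IsLeast { I : Set (LOFact σ) | TP P I = I } (OP P) :=
  fixpoint_eq_operational_general P
end

section
/- There is no infinite sequence I₁, I₂, …, I_k, … of sets of finite multisets over a finite alphabet Σ such that for every k and every j < k, I_k ⋢ I_j (i.e., each term fails to be subsumed by all earlier terms). -/
variable {σ : Type} [DecidableEq σ] [Fintype σ]

/-- Subsumption ordering on sets of facts: `I ⊑ J` iff every element of `I`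
is above some element of `J` w.r.t. multiset inclusion. -/
def sqle (I J : Set (Multiset σ)) : Prop := ∀ B ∈ I, ∃ A ∈ J, A ≤ B

/-!
For `j < k`, a failure of `I k ⊑ I j` is witnessed by some `f j k ∈ I k` lying above no element of
`I j`. For `j < k < l` the fact `f j k` is in `I k`, so `f k l` is not above it. It is therefore
enough to find `j < k < l` with `f j k ≤ f k l`. View facts as vectors in `Σ → ℕ` and fix a
nonprincipal ultrafilter on `ℕ`. In each coordinate, the reverse inequality cannot hold for almost
all `j`, almost all `k` and almost all `l`, since iterating it would give an infinite descent. Hence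
the inequality itself holds for almost all `j`, `k`, `l` in each of the finitely many coordinates,
so in all of them at once.
-/

open Filter

section PairSequences

variable {α β : Type*} {r : α → α → Prop} {s : β → β → Prop}

/-- The Ramsey-theoretic form of an *`ω²`-well-quasi-order*: the analogue of `WellQuasiOrdered` for
families indexed by pairs `j < k` of natural numbers, in which `(j, k)` is compared with `(k, l)`.
It is the condition on `r` that makes domination between sets a well-quasi-order. For simplicity
`f` is total; its values outside `j < k` do not matter. -/
def OmegaSqWellQuasiOrdered (r : α → α → Prop) : Prop :=
  ∀ f : ℕ → ℕ → α, ∃ j k l, j < k ∧ k < l ∧ r (f j k) (f k l)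

theorem OmegaSqWellQuasiOrdered.of_reflecting (hs : OmegaSqWellQuasiOrdered s) (e : α → β)
    (he : ∀ a b, s (e a) (e b) → r a b) : OmegaSqWellQuasiOrdered r := by
  intro f
  obtain ⟨j, k, l, hjk, hkl, h⟩ := hs fun j k => e (f j k)
  exact ⟨j, k, l, hjk, hkl, he _ _ h⟩

theorem OmegaSqWellQuasiOrdered.wellQuasiOrdered_forall_exists (hr : OmegaSqWellQuasiOrdered r) :
    WellQuasiOrdered fun J I : Set α => ∀ b ∈ I, ∃ a ∈ J, r a b := by
  intro I
  by_contra! bad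
  obtain ⟨b, -⟩ := bad 0 1 Nat.zero_lt_one
  have : Nonempty α := ⟨b⟩
  choose! f f_mem not_rel_f using bad
  obtain ⟨j, k, l, hjk, hkl, h⟩ := hr f
  exact not_rel_f k l hkl (f j k) (f_mem j k hjk) h

end PairSequences

theorem eventually_not_lt_of_wellFoundedLT {κ α : Type*} [LT α] [WellFoundedLT α]
    (U : Ultrafilter κ) (f : κ → κ → α) :
    ∀ᶠ j in U, ∀ᶠ k in U, ∀ᶠ l in U, ¬ f k l < f j k := by
  by_contra h
  simp only [← Ultrafilter.eventually_not, not_not] at h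
  let Descends (j k : κ) : Prop := ∀ᶠ l in U, f k l < f j k
  let descending : Set α := {a | ∃ j k, Descends j k ∧ (∀ᶠ l in U, Descends k l) ∧ f j k = a}
  have descending_nonempty : descending.Nonempty := by
    obtain ⟨j, hj⟩ := h.exists
    obtain ⟨k, hjk, hk⟩ := (hj.and h).exists
    exact ⟨f j k, j, k, hjk, hk, rfl⟩
  obtain ⟨_, ⟨j, k, hjk, hk, rfl⟩, minimal⟩ := wellFounded_lt.has_min descending descending_nonempty
  obtain ⟨l, hlt, hkl, hl⟩ := (hjk.and (hk.and h)).exists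
  exact minimal (f k l) ⟨k, l, hkl, hl, rfl⟩ hlt

section Pi

variable {ι : Type*} [Finite ι] {α : ι → Type*} [∀ i, LinearOrder (α i)]
  [∀ i, WellFoundedLT (α i)]

theorem eventually_pi_le_of_wellFoundedLT {κ : Type*} (U : Ultrafilter κ) (f : κ → κ → ∀ i, α i) :
    ∀ᶠ j in U, ∀ᶠ k in U, ∀ᶠ l in U, f j k ≤ f k l := by
  simp only [Pi.le_def, eventually_all]
  intro i
  simpa only [not_lt] using eventually_not_lt_of_wellFoundedLT U fun j k => f j k i

theorem omegaSqWellQuasiOrdered_pi_le :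
    OmegaSqWellQuasiOrdered fun a b : ∀ i, α i => a ≤ b := by
  intro f
  have eventually_gt (n : ℕ) : ∀ᶠ m in hyperfilter ℕ, n < m :=
    Nat.hyperfilter_le_atTop (eventually_gt_atTop n)
  obtain ⟨j, hj⟩ := (eventually_pi_le_of_wellFoundedLT (hyperfilter ℕ) f).exists
  obtain ⟨k, hk, hjk⟩ := (hj.and (eventually_gt j)).exists
  obtain ⟨l, hle, hkl⟩ := (hk.and (eventually_gt k)).exists
  exact ⟨j, k, l, hjk, hkl, hle⟩

theorem no_bad_sequence_general {β : Type*} [LE β] (e : β → ∀ i, α i)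
    (he : ∀ A B, e A ≤ e B → A ≤ B) :
    ¬ ∃ I : ℕ → Set β, ∀ k j, j < k → ¬ ∀ B ∈ I k, ∃ A ∈ I j, A ≤ B := by
  rintro ⟨I, hI⟩
  have domination_wqo :=
    (omegaSqWellQuasiOrdered_pi_le.of_reflecting e he).wellQuasiOrdered_forall_exists
  obtain ⟨j, k, hjk, hsub⟩ := domination_wqo I
  exact hI k j hjk hsub

end Pi

/-- There is no infinite sequence of sets of facts each of which fails to be
subsumed by all the earlier ones. -/
theorem no_bad_sequence :
    ¬ ∃ I : ℕ → Set (Multiset σ), ∀ k j, j < k → ¬ sqle (I k) (I j) :=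
  no_bad_sequence_general (fun A s => A.count s) fun _ _ => Multiset.le_iff_count.2
end

section
/- Soundness and completeness of the symbolic satisfiability judgment: for every set of facts I, context Δ, and facts A, A': (i) if I ⊩ Δ[A], then den(I) ⊨ Δ[A'] for every fact A' with A ≼ A'; (ii) if den(I) ⊨ Δ[A'], then there exists a fact A with A ≼ A' and I ⊩ Δ[A]. -/
variable {σ : Type} [DecidableEq σ] [Fintype σ]

/-- The denotation (upward closure) of a set of facts. -/
def den (I : Set (LOFact σ)) : Set (LOFact σ) := { B : LOFact σ | ∃ A ∈ I, A ≤ B }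

/-- The symbolic satisfiability judgment `I ⊩ Δ[A]`
(`B - A` is multiset difference, `A₁ ∪ A₂` is the multiset least upper bound). -/
inductive SSat (I : Set (LOFact σ)) : Ctx σ → LOFact σ → Prop
  | top (Δ : Ctx σ) : SSat I (Goal.top ::ₘ Δ) 0
  | fact (A B : LOFact σ) : B ∈ I → SSat I (A.map Goal.atom) (B - A)
  | par (G₁ G₂ : Goal σ) (Δ : Ctx σ) (A : LOFact σ) :
      SSat I (G₁ ::ₘ G₂ ::ₘ Δ) A → SSat I (Goal.par G₁ G₂ ::ₘ Δ) A
  | wth (G₁ G₂ : Goal σ) (Δ : Ctx σ) (A₁ A₂ : LOFact σ) :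
      SSat I (G₁ ::ₘ Δ) A₁ → SSat I (G₂ ::ₘ Δ) A₂ →
      SSat I (Goal.wth G₁ G₂ ::ₘ Δ) (A₁ ∪ A₂)

/-! Both judgments decompose a context by the same rules, so each direction is an induction on
derivations. At a fact `A`, residuation turns `B ≤ A + A'` into `B - A ≤ A'`, so `B - A` is the
least output compatible with `B`. At `&`, a single output must serve both branches:
`A₁ ∪ A₂` is the least such one, and since `⊨` over an upward closed interpretation is preserved
when the output grows, it is enough for both. -/

section

variable {I J : Set (LOFact σ)} {Δ : Ctx σ} {A A' : LOFact σ}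

omit [Fintype σ]

section

omit [DecidableEq σ]

theorem subset_den : I ⊆ den I := subset_upperClosure

theorem isUpperSet_den : IsUpperSet (den I) := (upperClosure I).upper

theorem Sat.of_le (hI : IsUpperSet I) (h : Sat I Δ A) (hle : A ≤ A') : Sat I Δ A' := by
  induction h with
  | top Δ A => exact .top Δ A'
  | fact C A hmem => exact .fact C A' (hI (add_le_add_right hle C) hmem)
  | par G₁ G₂ Δ A _ ih => exact .par G₁ G₂ Δ A' (ih hle)
  | wth G₁ G₂ Δ A _ _ ih₁ ih₂ => exact .wth G₁ G₂ Δ A' (ih₁ hle) (ih₂ hle)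

end

theorem SSat.sat (hIJ : I ⊆ J) (hJ : IsUpperSet J) (h : SSat I Δ A) : Sat J Δ A := by
  induction h with
  | top Δ => exact .top Δ 0
  | fact C B hB => exact .fact C (B - C) (hJ le_add_tsub (hIJ hB))
  | par G₁ G₂ Δ A _ ih => exact .par G₁ G₂ Δ A ih
  | wth G₁ G₂ Δ A₁ A₂ _ _ ih₁ ih₂ =>
    exact .wth G₁ G₂ Δ (A₁ ∪ A₂) (ih₁.of_le hJ Multiset.le_union_left)
      (ih₂.of_le hJ Multiset.le_union_right)

theorem Sat.exists_le_ssat (h : Sat (den I) Δ A') : ∃ A ≤ A', SSat I Δ A := by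
  induction h with
  | top Δ A' => exact ⟨0, Multiset.zero_le A', .top Δ⟩
  | fact C A' hmem =>
    obtain ⟨B, hB, hle⟩ := hmem
    exact ⟨B - C, tsub_le_iff_left.mpr hle, .fact C B hB⟩
  | par G₁ G₂ Δ A' _ ih =>
    obtain ⟨A, hle, hA⟩ := ih
    exact ⟨A, hle, .par G₁ G₂ Δ A hA⟩
  | wth G₁ G₂ Δ A' _ _ ih₁ ih₂ =>
    obtain ⟨A₁, hle₁, hA₁⟩ := ih₁
    obtain ⟨A₂, hle₂, hA₂⟩ := ih₂
    exact ⟨A₁ ∪ A₂, Multiset.union_le hle₁ hle₂, .wth G₁ G₂ Δ A₁ A₂ hA₁ hA₂⟩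

theorem ssat_sound_complete_general (I : Set (LOFact σ)) (Δ : Ctx σ) :
    (∀ A A' : LOFact σ, SSat I Δ A → A ≤ A' → Sat (den I) Δ A') ∧
    (∀ A' : LOFact σ, Sat (den I) Δ A' → ∃ A : LOFact σ, A ≤ A' ∧ SSat I Δ A) :=
  ⟨fun _ _ h hle => (h.sat subset_den isUpperSet_den).of_le isUpperSet_den hle,
    fun _ h => h.exists_le_ssat⟩

end

/-- Soundness and completeness of the symbolic satisfiability judgment `⊩`
w.r.t. `⊨` over the denotation. -/
theorem ssat_sound_complete (I : Set (LOFact σ)) (Δ : Ctx σ) :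
    (∀ A A' : LOFact σ, SSat I Δ A → A ≤ A' → Sat (den I) Δ A') ∧
    (∀ A' : LOFact σ, Sat (den I) Δ A' → ∃ A : LOFact σ, A ≤ A' ∧ SSat I Δ A) :=
  ssat_sound_complete_general I Δ
end

section
/- For all sets of facts I, J, every context Δ, and every fact A: (i) if I ⊩ Δ[A] and I ⊑ J, then there exists a fact A' with A' ≼ A and J ⊩ Δ[A']; (ii) for every chain I₁ ⊑ I₂ ⊑ … of sets of facts, if den(⋃ᵢ Iᵢ) ⊨ Δ[A] then there exists k such that den(I_k) ⊨ Δ[A]. -/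
variable {σ : Type} [DecidableEq σ] [Fintype σ]

/-! Induct on derivations. For `⊩`, smaller facts in the leaves give smaller outputs, because
`B ↦ B - A` and `∪` are monotone. For `⊨`, a derivation queries only finitely many facts, and
`⊑` is inclusion of denotations, so a directed family has a single member that answers them all;
the rule for `&` is the one place where two indices have to be merged. -/

section

variable {α : Type} {Δ : Ctx α} {A : LOFact α}

theorem SSat.exists_le_of_sqle [DecidableEq α] {I J : Set (LOFact α)} (h : SSat I Δ A)
    (hIJ : sqle I J) : ∃ A' ≤ A, SSat J Δ A' := by
  induction h with
  | top Δ => exact ⟨0, le_rfl, .top Δ⟩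
  | fact A B hB =>
    obtain ⟨C, hC, hCB⟩ := hIJ B hB
    exact ⟨C - A, tsub_le_tsub_right hCB A, .fact A C hC⟩
  | par G₁ G₂ Δ A _ ih =>
    obtain ⟨A', hA', h'⟩ := ih
    exact ⟨A', hA', .par G₁ G₂ Δ A' h'⟩
  | wth G₁ G₂ Δ A₁ A₂ _ _ ih₁ ih₂ =>
    obtain ⟨B₁, hB₁, h₁⟩ := ih₁
    obtain ⟨B₂, hB₂, h₂⟩ := ih₂
    exact ⟨B₁ ∪ B₂, sup_le_sup hB₁ hB₂, .wth G₁ G₂ Δ B₁ B₂ h₁ h₂⟩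

theorem Sat.mono_s7 {I J : Set (LOFact α)} (hIJ : I ⊆ J) (h : Sat I Δ A) : Sat J Δ A := by
  induction h with
  | top Δ A => exact .top Δ A
  | fact A A' hA => exact .fact A A' (hIJ hA)
  | par G₁ G₂ Δ A _ ih => exact .par G₁ G₂ Δ A ih
  | wth G₁ G₂ Δ A _ _ ih₁ ih₂ => exact .wth G₁ G₂ Δ A ih₁ ih₂

theorem sat_iUnion_of_directed {ι : Sort*} [Nonempty ι] {I : ι → Set (LOFact α)}
    (hI : Directed (· ⊆ ·) I) : Sat (⋃ i, I i) Δ A ↔ ∃ i, Sat (I i) Δ A := by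
  refine ⟨fun h ↦ ?_, fun ⟨i, h⟩ ↦ h.mono_s7 (Set.subset_iUnion I i)⟩
  induction h with
  | top Δ A => exact ⟨Classical.arbitrary ι, .top Δ A⟩
  | fact A A' hA =>
    obtain ⟨i, hi⟩ := Set.mem_iUnion.1 hA
    exact ⟨i, .fact A A' hi⟩
  | par G₁ G₂ Δ A _ ih =>
    obtain ⟨i, hi⟩ := ih
    exact ⟨i, .par G₁ G₂ Δ A hi⟩
  | wth G₁ G₂ Δ A _ _ ih₁ ih₂ =>
    obtain ⟨i, hi⟩ := ih₁
    obtain ⟨j, hj⟩ := ih₂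
    obtain ⟨k, hik, hjk⟩ := hI i j
    exact ⟨k, .wth G₁ G₂ Δ A (hi.mono_s7 hik) (hj.mono_s7 hjk)⟩

theorem den_iUnion {ι : Sort*} (I : ι → Set (LOFact α)) : den (⋃ i, I i) = ⋃ i, den (I i) := by
  ext B
  simp only [den, Set.mem_iUnion, Set.mem_ofPred_eq, ← exists_and_right]
  exact exists_comm

theorem den_subset_den_iff {I J : Set (LOFact α)} : den I ⊆ den J ↔ sqle I J := by
  refine ⟨fun h B hB ↦ h ⟨B, hB, le_rfl⟩, fun h B ⟨A, hA, hAB⟩ ↦ ?_⟩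
  obtain ⟨C, hC, hCA⟩ := h A hA
  exact ⟨C, hC, hCA.trans hAB⟩

theorem directed_sqle_of_sqle_succ {I : ℕ → Set (LOFact α)} (hI : ∀ i, sqle (I i) (I (i + 1))) :
    Directed sqle I := by
  have den_mono : Monotone fun i ↦ den (I i) :=
    monotone_nat_of_le_succ fun i ↦ den_subset_den_iff.2 (hI i)
  exact directed_of_isDirected_le fun _ _ hij ↦ den_subset_den_iff.1 (den_mono hij)

theorem sat_den_iUnion_of_directed {ι : Sort*} [Nonempty ι] {I : ι → Set (LOFact α)}
    (hI : Directed sqle I) : Sat (den (⋃ i, I i)) Δ A ↔ ∃ i, Sat (den (I i)) Δ A := by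
  have den_directed : Directed (· ⊆ ·) (den ∘ I) :=
    hI.mono_comp sqle fun _ _ ↦ den_subset_den_iff.2
  rw [den_iUnion]
  exact sat_iUnion_of_directed den_directed

theorem ssat_sqle_properties_general [DecidableEq α] {ι : Sort*} [Nonempty ι] :
    (∀ (I J : Set (LOFact α)) (Δ : Ctx α) (A : LOFact α),
        SSat I Δ A → sqle I J → ∃ A' ≤ A, SSat J Δ A') ∧
    (∀ I : ι → Set (LOFact α), Directed sqle I → ∀ (Δ : Ctx α) (A : LOFact α),
        Sat (den (⋃ i, I i)) Δ A ↔ ∃ i, Sat (den (I i)) Δ A) :=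
  ⟨fun _ _ _ _ ↦ SSat.exists_le_of_sqle, fun _ hI _ _ ↦ sat_den_iUnion_of_directed hI⟩

end

/-- (i) `⊩` is monotone (up to `≼`) w.r.t. the subsumption ordering `⊑`;
(ii) `⊨` over denotations is finitary on `⊑`-chains. -/
theorem ssat_sqle_properties :
    (∀ (I J : Set (LOFact σ)) (Δ : Ctx σ) (A : LOFact σ),
        SSat I Δ A → sqle I J → ∃ A' : LOFact σ, A' ≤ A ∧ SSat J Δ A') ∧
    (∀ (I : ℕ → Set (LOFact σ)), (∀ i, sqle (I i) (I (i + 1))) →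
        ∀ (Δ : Ctx σ) (A : LOFact σ),
          Sat (den (⋃ i, I i)) Δ A → ∃ k, Sat (den (I k)) Δ A) := by
  obtain ⟨ssat_mono, sat_iUnion⟩ := ssat_sqle_properties_general (α := σ) (ι := ℕ)
  exact ⟨ssat_mono, fun I hI Δ A ↦ (sat_iUnion I (directed_sqle_of_sqle_succ hI) Δ A).1⟩
end

section
/- For every LO program P, the symbolic operator S_P is monotone with respect to ⊑ (if I ⊑ J then S_P(I) ⊑ S_P(J)) and finitary with respect to ⊑ (for every chain I₁ ⊑ I₂ ⊑ … of sets of facts, S_P(⋃ᵢ Iᵢ) ⊑ ⋃ᵢ S_P(Iᵢ)). -/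
variable {σ : Type} [DecidableEq σ] [Fintype σ]

/-- The symbolic fixpoint operator `S_P`. -/
def SP (P : LOProgram σ) (I : Set (LOFact σ)) : Set (LOFact σ) :=
  { M | ∃ H G A, (H, G) ∈ P ∧ SSat I ({G} : Ctx σ) A ∧ M = H + A }

/-! The judgment `I ⊩ Δ[A]` uses an element `B` of `I` only through `B - C`, which is monotone in
`B`, and the rules build `A` by the monotone operation `∪`; so lowering elements of `I` can only
lower `A`, which gives monotonicity. A derivation is a finite tree, so it consults finitely many
elements of a union; the only rule joining two subderivations is the one for `&`, where
directedness provides a common index to which monotonicity transports both. -/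

section

omit [DecidableEq σ] [Fintype σ]

instance : Std.Refl (sqle (σ := σ)) where
  refl _ B hB := ⟨B, hB, le_rfl⟩

instance : IsTrans (Set (Multiset σ)) sqle where
  trans _ _ _ hIJ hJK B hB :=
    let ⟨C, hC, hCB⟩ := hIJ B hB
    let ⟨D, hD, hDC⟩ := hJK C hC
    ⟨D, hD, hDC.trans hCB⟩

theorem directed_sqle_of_forall_succ {I : ℕ → Set (Multiset σ)}
    (hI : ∀ i, sqle (I i) (I (i + 1))) : Directed sqle I :=
  directed_of_isDirected_le (Nat.rel_of_forall_rel_succ_of_le sqle hI)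

end

section

omit [Fintype σ]

theorem SSat.mono {I J : Set (LOFact σ)} {Δ : Ctx σ} {A : LOFact σ} (hIJ : sqle I J)
    (hA : SSat I Δ A) : ∃ A' ≤ A, SSat J Δ A' := by
  induction hA with
  | top Δ => exact ⟨0, le_rfl, .top Δ⟩
  | fact A B hB =>
    obtain ⟨C, hC, hCB⟩ := hIJ B hB
    exact ⟨C - A, tsub_le_tsub_right hCB A, .fact A C hC⟩
  | par G₁ G₂ Δ A _ ih =>
    obtain ⟨A', hle, hA'⟩ := ih
    exact ⟨A', hle, .par G₁ G₂ Δ A' hA'⟩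
  | wth G₁ G₂ Δ A₁ A₂ _ _ ih₁ ih₂ =>
    obtain ⟨B₁, hle₁, hB₁⟩ := ih₁
    obtain ⟨B₂, hle₂, hB₂⟩ := ih₂
    exact ⟨B₁ ∪ B₂, sup_le_sup hle₁ hle₂, .wth G₁ G₂ Δ B₁ B₂ hB₁ hB₂⟩

theorem SP_mono (P : LOProgram σ) {I J : Set (LOFact σ)} (hIJ : sqle I J) :
    sqle (SP P I) (SP P J) := by
  rintro _ ⟨H, G, A, hHG, hA, rfl⟩
  obtain ⟨A', hle, hA'⟩ := hA.mono hIJ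
  exact ⟨H + A', ⟨H, G, A', hHG, hA', rfl⟩, add_le_add_right hle H⟩

variable {ι : Sort*} [Nonempty ι] {I : ι → Set (LOFact σ)}

theorem SSat.exists_of_iUnion {Δ : Ctx σ} {A : LOFact σ} (hI : Directed sqle I)
    (hA : SSat (⋃ i, I i) Δ A) : ∃ i, ∃ A' ≤ A, SSat (I i) Δ A' := by
  induction hA with
  | top Δ => exact ⟨Classical.arbitrary ι, 0, le_rfl, .top Δ⟩
  | fact A B hB =>
    obtain ⟨i, hi⟩ := Set.mem_iUnion.1 hB
    exact ⟨i, B - A, le_rfl, .fact A B hi⟩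
  | par G₁ G₂ Δ A _ ih =>
    obtain ⟨i, A', hle, hA'⟩ := ih
    exact ⟨i, A', hle, .par G₁ G₂ Δ A' hA'⟩
  | wth G₁ G₂ Δ A₁ A₂ _ _ ih₁ ih₂ =>
    obtain ⟨i, B₁, hle₁, hB₁⟩ := ih₁
    obtain ⟨j, B₂, hle₂, hB₂⟩ := ih₂
    obtain ⟨k, hik, hjk⟩ := hI i j
    obtain ⟨C₁, hCB₁, hC₁⟩ := hB₁.mono hik
    obtain ⟨C₂, hCB₂, hC₂⟩ := hB₂.mono hjk
    exact ⟨k, C₁ ∪ C₂, sup_le_sup (hCB₁.trans hle₁) (hCB₂.trans hle₂),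
      .wth G₁ G₂ Δ C₁ C₂ hC₁ hC₂⟩

theorem SP_iUnion_sqle_of_directed (P : LOProgram σ) (hI : Directed sqle I) :
    sqle (SP P (⋃ i, I i)) (⋃ i, SP P (I i)) := by
  rintro _ ⟨H, G, A, hHG, hA, rfl⟩
  obtain ⟨i, A', hle, hA'⟩ := hA.exists_of_iUnion hI
  exact ⟨H + A', Set.mem_iUnion.2 ⟨i, H, G, A', hHG, hA', rfl⟩, add_le_add_right hle H⟩

end

omit [Fintype σ] in
theorem SP_monotone_finitary_general {ι : Sort*} [Nonempty ι] (P : LOProgram σ) :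
    (∀ I J : Set (LOFact σ), sqle I J → sqle (SP P I) (SP P J)) ∧
    (∀ I : ι → Set (LOFact σ), Directed sqle I →
        sqle (SP P (⋃ i, I i)) (⋃ i, SP P (I i))) :=
  ⟨fun _ _ ↦ SP_mono P, fun _ ↦ SP_iUnion_sqle_of_directed P⟩

/-- `S_P` is monotone and finitary w.r.t. the subsumption ordering `⊑`. -/
theorem SP_monotone_finitary (P : LOProgram σ) :
    (∀ I J : Set (LOFact σ), sqle I J → sqle (SP P I) (SP P J)) ∧
    (∀ I : ℕ → Set (LOFact σ), (∀ i, sqle (I i) (I (i + 1))) →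
        sqle (SP P (⋃ i, I i)) (⋃ i, SP P (I i))) :=
  have ⟨mono, finitary⟩ := SP_monotone_finitary_general (ι := ℕ) P
  ⟨mono, fun I hI ↦ finitary I (directed_sqle_of_forall_succ hI)⟩
end

section
/- For every flat LO program P in which every clause has at most one conjunct in the body (every clause is of the form H ⊸ H' or H ⊸ ⊤), every set of facts I, and every upward-closed set of facts J: if I ⊑ α(J), then there exists a natural number h such that α(T_P(I)) ⊑ α(T_P^h(J)), where T_P^h denotes the h-fold iterate of T_P. -/
variable {σ : Type} [DecidableEq σ] [Fintype σ]

/-- A flat LO program: a finite set of clauses `H ⊸ H₁ & … & Hₙ` (a head multiset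
together with the nonempty list of body conjunct multisets) or `H ⊸ ⊤` (empty list). -/
abbrev FlatProgram (σ : Type) := Finset (Multiset σ × List (Multiset σ))

/-- The specialized fixpoint operator for flat LO programs:
`T_P(I) = { ⟨H⟩ + (C₁⊔…⊔Cₙ) | H ⊸ H₁&…&Hₙ ∈ P, ⟨Hᵢ⟩+Cᵢ ∈ I } ∪ { ⟨H⟩ | H ⊸ ⊤ ∈ P }`,
where `∪` on multisets is the pointwise-maximum least upper bound. -/
def TPflat (P : FlatProgram σ) (I : Set (Multiset σ)) : Set (Multiset σ) :=
  { M | ∃ H Ds, (H, Ds) ∈ P ∧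
      ((Ds = [] ∧ M = H) ∨
       (Ds ≠ [] ∧ ∃ Cs : List (Multiset σ), Cs.length = Ds.length ∧
          (∀ p ∈ Ds.zip Cs, p.1 + p.2 ∈ I) ∧
          M = H + Cs.foldr (· ∪ ·) 0)) }

/-- The abstraction mapping a multiset to its underlying set
(each occurring atom kept with multiplicity one). -/
def alphaF (A : Multiset σ) : Multiset σ := A.dedup

/-- The abstraction lifted to sets of facts. -/
def alphaSet (I : Set (Multiset σ)) : Set (Multiset σ) := alphaF '' I

/-!
If `B ∈ J` has support contained in that of `A`, then `B ≤ n • A` for all large `n`, hence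
`n • A ∈ J`. How large `n` must be depends only on the support of `A`, and there are finitely many
supports, so a single `n ≠ 0` serves every `A`. For `D + C ∈ I` this gives `n • D + n • C ∈ J`, and
`n` applications of a clause `H ⊸ D` turn it into `n • H + n • C`, which has the same abstraction
as `H + C`.
-/

open Filter

section Multiset

variable {α : Type*} [DecidableEq α]

theorem eventually_le_nsmul_of_dedup_le {A B : Multiset α} (h : B.dedup ≤ A) :
    ∀ᶠ n : ℕ in atTop, B ≤ n • A := by
  obtain ⟨k, hk⟩ := Multiset.le_smul_dedup B
  filter_upwards [eventually_ge_atTop k] with n hn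
  calc
    B ≤ k • B.dedup := hk
    _ ≤ n • B.dedup := by gcongr
    _ ≤ n • A := by gcongr

theorem eventually_forall_nsmul_mem_of_isUpperSet [Finite α] {J : Set (Multiset α)}
    (hJ : IsUpperSet J) :
    ∀ᶠ n : ℕ in atTop, ∀ A, (∃ B ∈ J, B.dedup ≤ A) → n • A ∈ J := by
  have eventually_support_mem :
      ∀ᶠ n : ℕ in atTop, ∀ S : Finset α, (∃ B ∈ J, B.dedup ≤ S.val) → n • S.val ∈ J := by
    refine eventually_all.2 fun S => eventually_imp_distrib_left.2 ?_
    rintro ⟨B, hB, hBS⟩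
    exact (eventually_le_nsmul_of_dedup_le hBS).mono fun n hn => hJ hn hB
  filter_upwards [eventually_support_mem] with n hn A ⟨B, hB, hBA⟩
  have hB_support : B.dedup ≤ A.toFinset.val := Multiset.le_dedup.2 ⟨hBA, B.nodup_dedup⟩
  exact hJ (nsmul_le_nsmul_right A.dedup_le n) (hn A.toFinset ⟨B, hB, hB_support⟩)

end Multiset

section FlatProgram

variable {α : Type} [DecidableEq α] {P : FlatProgram α} {I J : Set (Multiset α)}
  {H D C M : Multiset α}

theorem mem_TPflat_of_top (hH : (H, []) ∈ P) : H ∈ TPflat P I :=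
  ⟨H, [], hH, Or.inl ⟨rfl, rfl⟩⟩

theorem add_mem_TPflat (hHD : (H, [D]) ∈ P) (hDC : D + C ∈ I) : H + C ∈ TPflat P I :=
  ⟨H, [D], hHD, Or.inr ⟨by simp, [C], by simpa using hDC⟩⟩

theorem mem_TPflat_iff_of_length_le_one (hP : ∀ c ∈ P, c.2.length ≤ 1) :
    M ∈ TPflat P I ↔
      (M, []) ∈ P ∨ ∃ H D C, (H, [D]) ∈ P ∧ D + C ∈ I ∧ M = H + C := by
  constructor
  · rintro ⟨H, Ds, hc, ⟨rfl, rfl⟩ | ⟨hDs, Cs, hlen, hmem, rfl⟩⟩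
    · exact Or.inl hc
    · obtain ⟨D, rfl⟩ : ∃ D, Ds = [D] :=
        List.length_eq_one_iff.1 ((hP _ hc).antisymm (List.length_pos_iff.2 hDs))
      obtain ⟨C, rfl⟩ : ∃ C, Cs = [C] := List.length_eq_one_iff.1 hlen
      exact Or.inr ⟨H, D, C, hc, by simpa using hmem, by simp⟩
  · rintro (hM | ⟨H, D, C, hHD, hDC, rfl⟩)
    · exact mem_TPflat_of_top hM
    · exact add_mem_TPflat hHD hDC

theorem nsmul_add_mem_iterate_TPflat (hHD : (H, [D]) ∈ P) {n : ℕ} (hJ : n • D + C ∈ J) :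
    n • H + C ∈ (TPflat P)^[n] J := by
  induction n generalizing C with
  | zero => simpa using hJ
  | succ n ih =>
    have mem_after_n_steps : D + (n • H + C) ∈ (TPflat P)^[n] J := by
      rw [add_left_comm]
      exact ih (by rwa [← add_assoc, ← succ_nsmul])
    rw [Function.iterate_succ_apply', succ_nsmul', add_assoc]
    exact add_mem_TPflat hHD mem_after_n_steps

theorem alphaF_nsmul {n : ℕ} (hn : n ≠ 0) (A : Multiset α) : alphaF (n • A) = alphaF A :=
  Multiset.dedup_nsmul hn

theorem alphaSet_TPflat_subset_of_nsmul_mem (hP : ∀ c ∈ P, c.2.length ≤ 1) {n : ℕ} (hn : n ≠ 0)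
    (hIJ : ∀ A ∈ I, n • A ∈ J) :
    alphaSet (TPflat P I) ⊆ alphaSet ((TPflat P)^[n] J) := by
  rintro _ ⟨M, hM, rfl⟩
  obtain hM_top | ⟨H, D, C, hHD, hDC, rfl⟩ := (mem_TPflat_iff_of_length_le_one hP).1 hM
  · obtain ⟨m, rfl⟩ := Nat.exists_eq_succ_of_ne_zero hn
    rw [Function.iterate_succ_apply']
    exact ⟨M, mem_TPflat_of_top hM_top, rfl⟩
  · have hJ : n • D + n • C ∈ J := nsmul_add D C n ▸ hIJ _ hDC
    exact ⟨n • H + n • C, nsmul_add_mem_iterate_TPflat hHD hJ, by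
      rw [← nsmul_add, alphaF_nsmul hn]⟩

end FlatProgram

/-- Key lemma for completeness of the DLP abstraction: for a flat LO program with
at most one conjunct in each clause body, if `I ⊑ α(J)` with `J` upward closed,
then one abstract step is covered by finitely many concrete steps. -/
theorem one_conjunct_completeness_lemma (P : FlatProgram σ)
    (hP : ∀ c ∈ P, c.2.length ≤ 1)
    (I J : Set (Multiset σ))
    (hJ : ∀ B ∈ J, ∀ B' : Multiset σ, B ≤ B' → B' ∈ J)
    (hIJ : sqle I (alphaSet J)) :
    ∃ h : ℕ, sqle (alphaSet (TPflat P I)) (alphaSet ((TPflat P)^[h] J)) := by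
  have hJ_upper : IsUpperSet J := fun B B' hle hB => hJ B hB B' hle
  obtain ⟨n, hn_mem, hn⟩ :=
    ((eventually_forall_nsmul_mem_of_isUpperSet hJ_upper).and (eventually_ne_atTop 0)).exists
  have hn_I : ∀ A ∈ I, n • A ∈ J := by
    intro A hA
    obtain ⟨_, ⟨B, hB, rfl⟩, hBA⟩ := hIJ A hA
    exact hn_mem A ⟨B, hB, hBA⟩
  exact ⟨n, fun A hA => ⟨A, alphaSet_TPflat_subset_of_nsmul_mem hP hn hn_I hA, le_rfl⟩⟩
end

section
/- For every LO₁ program P and every constraint interpretation 𝕀 (a set of nonempty sets of facts, each member representing the solution set of a satisfiable constraint), den(S¹_P(𝕀)) = T¹_P(den(𝕀)): the denotation of the symbolic constraint operator applied to 𝕀 equals the ground LO₁ immediate-consequence operator applied to the denotation of 𝕀. -/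
/-- LO₁ goals: atoms, ⊤, the constant 1, ⅋ (par) and & (with). -/
inductive Goal1 (σ : Type) : Type
  | atom : σ → Goal1 σ
  | top : Goal1 σ
  | one : Goal1 σ
  | par : Goal1 σ → Goal1 σ → Goal1 σ
  | wth : Goal1 σ → Goal1 σ → Goal1 σ
  deriving DecidableEq

variable {σ : Type} [DecidableEq σ] [Fintype σ]

/-- A context: a finite multiset of LO₁ goals. -/
abbrev Ctx1 (σ : Type) := Multiset (Goal1 σ)

/-- An LO₁ program: a finite set of clauses `H ⊸ G`. -/
abbrev LO1Program (σ : Type) := Finset (Multiset σ × Goal1 σ)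

/-- The LO₁ satisfiability judgment `I ⊨₁ Δ[A]`. -/
inductive Sat1 (I : Set (LOFact σ)) : Ctx1 σ → LOFact σ → Prop
  | one : Sat1 I ({Goal1.one} : Ctx1 σ) 0
  | top (Δ : Ctx1 σ) (A : LOFact σ) : Sat1 I (Goal1.top ::ₘ Δ) A
  | fact (A A' : LOFact σ) : A + A' ∈ I → Sat1 I (A.map Goal1.atom) A'
  | par (G₁ G₂ : Goal1 σ) (Δ : Ctx1 σ) (A : LOFact σ) :
      Sat1 I (G₁ ::ₘ G₂ ::ₘ Δ) A → Sat1 I (Goal1.par G₁ G₂ ::ₘ Δ) A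
  | wth (G₁ G₂ : Goal1 σ) (Δ : Ctx1 σ) (A : LOFact σ) :
      Sat1 I (G₁ ::ₘ Δ) A → Sat1 I (G₂ ::ₘ Δ) A → Sat1 I (Goal1.wth G₁ G₂ ::ₘ Δ) A

/-- The LO₁ immediate-consequence operator `T¹_P`. -/
def TP1 (P : LO1Program σ) (I : Set (LOFact σ)) : Set (LOFact σ) :=
  { M | ∃ H G A, (H, G) ∈ P ∧ Sat1 I ({G} : Ctx1 σ) A ∧ M = H + A }

/-- The denotation of a constraint interpretation: union of the solution sets. -/
def denC (CI : Set (Set (Multiset σ))) : Set (Multiset σ) := ⋃₀ CI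

/-- The symbolic constraint judgment `𝕀 ⊩₁ Δ[S]`, where constraints are identified
with their (nonempty) sets of solutions. -/
inductive CSat (CI : Set (Set (Multiset σ))) : Ctx1 σ → Set (Multiset σ) → Prop
  | one : CSat CI ({Goal1.one} : Ctx1 σ) ({0} : Set (Multiset σ))
  | top (Δ : Ctx1 σ) : CSat CI (Goal1.top ::ₘ Δ) Set.univ
  | fact (A : LOFact σ) (ψ : Set (Multiset σ)) :
      ψ ∈ CI → { C : Multiset σ | C + A ∈ ψ }.Nonempty →
      CSat CI (A.map Goal1.atom) { C : Multiset σ | C + A ∈ ψ }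
  | par (G₁ G₂ : Goal1 σ) (Δ : Ctx1 σ) (S : Set (Multiset σ)) :
      CSat CI (G₁ ::ₘ G₂ ::ₘ Δ) S → CSat CI (Goal1.par G₁ G₂ ::ₘ Δ) S
  | wth (G₁ G₂ : Goal1 σ) (Δ : Ctx1 σ) (S₁ S₂ : Set (Multiset σ)) :
      (S₁ ∩ S₂).Nonempty →
      CSat CI (G₁ ::ₘ Δ) S₁ → CSat CI (G₂ ::ₘ Δ) S₂ →
      CSat CI (Goal1.wth G₁ G₂ ::ₘ Δ) (S₁ ∩ S₂)

/-- The symbolic constraint operator `S¹_P`. -/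
def SP1 (P : LO1Program σ) (CI : Set (Set (Multiset σ))) : Set (Set (Multiset σ)) :=
  { T | ∃ H G S, (H, G) ∈ P ∧ CSat CI ({G} : Ctx1 σ) S ∧
        T = (fun C : Multiset σ => H + C) '' S }

/-!
A symbolic derivation `𝕀 ⊩₁ Δ[S]` stands for all the ground derivations `den(𝕀) ⊨₁ Δ[A]` with
`A ∈ S`, and the rules of the two judgments correspond one to one. The only delicate rule is the one
for `&`: two ground derivations with the same output `A` lift to symbolic ones with sets `S₁` and
`S₂` chosen independently, but both contain `A`, so the side condition `S₁ ∩ S₂ ≠ ∅` holds.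
-/

section

omit [DecidableEq σ] [Fintype σ]

variable {P : LO1Program σ} {CI : Set (Set (Multiset σ))} {Δ : Ctx1 σ}

theorem CSat.sat1_of_mem {S : Set (Multiset σ)} (h : CSat CI Δ S) {A : LOFact σ} (hA : A ∈ S) :
    Sat1 (denC CI) Δ A := by
  induction h with
  | one => exact Set.eq_of_mem_singleton hA ▸ Sat1.one
  | top Δ => exact Sat1.top Δ A
  | fact B ψ hψ _ =>
    have hBA : B + A ∈ ψ := add_comm A B ▸ hA
    exact Sat1.fact B A ⟨ψ, hψ, hBA⟩
  | par G₁ G₂ Δ S _ ih => exact Sat1.par G₁ G₂ Δ A (ih hA)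
  | wth G₁ G₂ Δ S₁ S₂ _ _ _ ih₁ ih₂ => exact Sat1.wth G₁ G₂ Δ A (ih₁ hA.1) (ih₂ hA.2)

theorem Sat1.exists_csat_mem {A : LOFact σ} (h : Sat1 (denC CI) Δ A) :
    ∃ S, CSat CI Δ S ∧ A ∈ S := by
  induction h with
  | one => exact ⟨{0}, CSat.one, Set.mem_singleton 0⟩
  | top Δ A => exact ⟨Set.univ, CSat.top Δ, Set.mem_univ A⟩
  | fact B A hBA =>
    obtain ⟨ψ, hψ, hBAψ⟩ := hBA
    have hAB : A + B ∈ ψ := add_comm B A ▸ hBAψ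
    exact ⟨{C | C + B ∈ ψ}, CSat.fact B ψ hψ ⟨A, hAB⟩, hAB⟩
  | par G₁ G₂ Δ A _ ih =>
    obtain ⟨S, hS, hA⟩ := ih
    exact ⟨S, CSat.par G₁ G₂ Δ S hS, hA⟩
  | wth G₁ G₂ Δ A _ _ ih₁ ih₂ =>
    obtain ⟨S₁, hS₁, hA₁⟩ := ih₁
    obtain ⟨S₂, hS₂, hA₂⟩ := ih₂
    have hA : A ∈ S₁ ∩ S₂ := ⟨hA₁, hA₂⟩
    exact ⟨S₁ ∩ S₂, CSat.wth G₁ G₂ Δ S₁ S₂ ⟨A, hA⟩ hS₁ hS₂, hA⟩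

theorem sat1_denC_iff {A : LOFact σ} :
    Sat1 (denC CI) Δ A ↔ ∃ S, CSat CI Δ S ∧ A ∈ S :=
  ⟨Sat1.exists_csat_mem, fun ⟨_, hS, hA⟩ => hS.sat1_of_mem hA⟩

theorem mem_denC_SP1 {M : Multiset σ} :
    M ∈ denC (SP1 P CI) ↔
      ∃ H G A, (H, G) ∈ P ∧ (∃ S, CSat CI {G} S ∧ A ∈ S) ∧ M = H + A := by
  constructor
  · rintro ⟨_, ⟨H, G, S, hHG, hS, rfl⟩, A, hA, rfl⟩
    exact ⟨H, G, A, hHG, ⟨S, hS, hA⟩, rfl⟩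
  · rintro ⟨H, G, A, hHG, ⟨S, hS, hA⟩, rfl⟩
    exact ⟨(H + ·) '' S, ⟨H, G, S, hHG, hS, rfl⟩, A, hA, rfl⟩

theorem denC_SP1_eq_TP1_denC_general (P : LO1Program σ) (CI : Set (Set (Multiset σ))) :
    denC (SP1 P CI) = TP1 P (denC CI) := by
  ext M
  simp only [mem_denC_SP1, TP1, Set.mem_ofPred_eq, sat1_denC_iff]

end

/-- Soundness and completeness of the constraint-based symbolic operator `S¹_P`
w.r.t. the ground LO₁ operator `T¹_P`: for every constraint interpretation `𝕀`
(all of whose members are nonempty), `den(S¹_P(𝕀)) = T¹_P(den(𝕀))`. -/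
theorem denC_SP1_eq_TP1_denC (P : LO1Program σ) (CI : Set (Set (Multiset σ)))
    (hCI : ∀ S ∈ CI, S.Nonempty) :
    denC (SP1 P CI) = TP1 P (denC CI) :=
  denC_SP1_eq_TP1_denC_general P CI
end
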